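/- Let a, b, c be pairwise distinct elements of ℂ ∖ {0,1}; set u₁ = 1 + u + v, v₁ = a + b·u + c·v, A₁ = (b−z)/(b−c), B₁ = (c−z)/(c−b), a₁ = (a−b)/(b−c), b₁ = (a−c)/(c−b), and P(z) = z(z−1)·A₁B₁(A₁b₁ − B₁a₁). Let K = Frac(ℂ[z,w₂,t₃,x]/(w₂³ − P(z), x³ − t₃(t₃+1))) be the function field of the product C₁ × F₁ of the curves C₁: w₂³ = P(z) and F₁: x³ = t₃(t₃+1), let τ be the order-3 automorphism of K with τ(w₂) = ω²·w₂, τ(x) = ω²·x (fixing z, t₃), and let ρ be the order-3 automorphism of K with ρ(w₂) = ω·w₂ (fixing z, t₃, x), which preserves the fixed field L = K^τ. Then there is a ℂ-algebra isomorphism φ from the function field of the affine surface S: w³·u₁v₁(v₁−u₁) = u·v (coordinates (w,u,v)) onto L such that φ intertwines the order-3 automorphism w ↦ ω²·w of Frac(S) with the restriction of ρ to L. In other words, S is G-birationally equivalent to the quotient (C₁ × F₁)/G with its residual G = ℤ/3ℤ action coming from the curve factor C₁. -/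

import Mathlib

/-!
Formalization conventions.

* The function field of an affine variety whose coordinate ring `ℂ[x₁,…,xₙ]/I` is an
  integral domain is formalized as `FractionRing` of that coordinate ring (for the total
  rings of fractions of the rings appearing here this is the function field).
* Two such varieties are birationally equivalent iff their function fields are
  isomorphic as `ℂ`-algebras.
-/

noncomputable section
open MvPolynomial

/-- `ω = exp(2πi/3) ∈ ℂ`, a fixed primitive cube root of unity. -/
def ω : ℂ := Complex.exp (2 * Real.pi * Complex.I / 3)

/-- Coordinate ring of the affine hypersurface `f = 0` in `ℂⁿ`. -/
abbrev HSurf {n : ℕ} (f : MvPolynomial (Fin n) ℂ) : Type :=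
  MvPolynomial (Fin n) ℂ ⧸ Ideal.span {f}

/-- Coordinate ring of the affine variety `f = g = 0` in `ℂⁿ`. -/
abbrev HSurf2 {n : ℕ} (f g : MvPolynomial (Fin n) ℂ) : Type :=
  MvPolynomial (Fin n) ℂ ⧸ Ideal.span {f, g}

/-- The image of a polynomial `p` in the function field of the hypersurface `f = 0`. -/
def cls {n : ℕ} (f : MvPolynomial (Fin n) ℂ) (p : MvPolynomial (Fin n) ℂ) :
    FractionRing (HSurf f) :=
  algebraMap (HSurf f) (FractionRing (HSurf f)) (Ideal.Quotient.mk _ p)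

/-- The image of a polynomial `p` in the function field of the variety `f = g = 0`. -/
def cls2 {n : ℕ} (f g : MvPolynomial (Fin n) ℂ) (p : MvPolynomial (Fin n) ℂ) :
    FractionRing (HSurf2 f g) :=
  algebraMap (HSurf2 f g) (FractionRing (HSurf2 f g)) (Ideal.Quotient.mk _ p)

/-- `u₁ = 1 + u + v` in the coordinates of `S` (`w = X 0`, `u = X 1`, `v = X 2`). -/
def u₁S : MvPolynomial (Fin 3) ℂ := 1 + X 1 + X 2

/-- `v₁ = a + b·u + c·v`. -/
def v₁S (a b c : ℂ) : MvPolynomial (Fin 3) ℂ := C a + C b * X 1 + C c * X 2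

/-- Defining polynomial of the affine surface `S : w³·u₁v₁(v₁−u₁) = u·v`. -/
def pS (a b c : ℂ) : MvPolynomial (Fin 3) ℂ :=
  X 0 ^ 3 * u₁S * v₁S a b c * (v₁S a b c - u₁S) - X 1 * X 2

/-- The constant `a₁ = (a−b)/(b−c)`. -/
def a₁ (a b c : ℂ) : ℂ := (a - b) / (b - c)

/-- The constant `b₁ = (a−c)/(c−b)`. -/
def b₁ (a b c : ℂ) : ℂ := (a - c) / (c - b)

/-- `A₁ = (b−z)/(b−c)` as a polynomial in the coordinates of `C₁ × F₁`
(`z = X 0`, `w₂ = X 1`, `t₃ = X 2`, `x = X 3`). -/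
def A₁4 (b c : ℂ) : MvPolynomial (Fin 4) ℂ := C (b - c)⁻¹ * (C b - X 0)

/-- `B₁ = (c−z)/(c−b)`. -/
def B₁4 (b c : ℂ) : MvPolynomial (Fin 4) ℂ := C (c - b)⁻¹ * (C c - X 0)

/-- `P(z) = z(z−1)·A₁B₁(A₁b₁ − B₁a₁)` as a polynomial in `z = X 0`. -/
def P4 (a b c : ℂ) : MvPolynomial (Fin 4) ℂ :=
  X 0 * (X 0 - 1) * A₁4 b c * B₁4 b c * (A₁4 b c * C (b₁ a b c) - B₁4 b c * C (a₁ a b c))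

/-- Defining polynomial of the curve `C₁ : w₂³ = P(z)`, as an equation in `ℂ⁴`. -/
def pC₁ (a b c : ℂ) : MvPolynomial (Fin 4) ℂ := X 1 ^ 3 - P4 a b c

/-- Defining polynomial of the curve `F₁ : x³ = t₃(t₃+1)`, as an equation in `ℂ⁴`. -/
def pF₁4 : MvPolynomial (Fin 4) ℂ := X 3 ^ 3 - X 2 * (X 2 + 1)

lemma omega_pow_three : ω ^ 3 = 1 := by
  have h := Complex.isPrimitiveRoot_exp 3 (by norm_num)
  have := h.pow_eq_one
  simpa [ω] using this

lemma omega_ne_one : ω ≠ 1 := by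
  have h := Complex.isPrimitiveRoot_exp 3 (by norm_num)
  have := h.ne_one (by norm_num)
  simpa [ω] using this

lemma omega_sq_ne_one : ω ^ 2 ≠ 1 := by
  intro h
  apply omega_ne_one
  have := omega_pow_three
  rw [pow_succ, h, one_mul] at this
  exact this

lemma omega_sum : 1 + ω + ω ^ 2 = 0 := by
  have h1 : (ω - 1) * (1 + ω + ω ^ 2) = 0 := by
    linear_combination omega_pow_three
  exact (mul_eq_zero.mp h1).resolve_left (sub_ne_zero.mpr omega_ne_one)

/-- class of a polynomial in the fraction ring of a quotient -/
def clsI {n : ℕ} (I : Ideal (MvPolynomial (Fin n) ℂ)) (p : MvPolynomial (Fin n) ℂ) :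
    FractionRing (MvPolynomial (Fin n) ℂ ⧸ I) :=
  algebraMap (MvPolynomial (Fin n) ℂ ⧸ I) (FractionRing (MvPolynomial (Fin n) ℂ ⧸ I))
    (Ideal.Quotient.mk _ p)

lemma algHom_ext_clsI {n : ℕ} (I : Ideal (MvPolynomial (Fin n) ℂ))
    [IsDomain (MvPolynomial (Fin n) ℂ ⧸ I)] {A : Type*} [Field A] [Algebra ℂ A]
    (f g : FractionRing (MvPolynomial (Fin n) ℂ ⧸ I) →ₐ[ℂ] A)
    (h : ∀ i, f (clsI I (X i)) = g (clsI I (X i))) : f = g := by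
  have h2 : f.comp ((IsScalarTower.toAlgHom ℂ (MvPolynomial (Fin n) ℂ ⧸ I)
      (FractionRing (MvPolynomial (Fin n) ℂ ⧸ I))).comp (Ideal.Quotient.mkₐ ℂ I)) =
      g.comp ((IsScalarTower.toAlgHom ℂ (MvPolynomial (Fin n) ℂ ⧸ I)
      (FractionRing (MvPolynomial (Fin n) ℂ ⧸ I))).comp (Ideal.Quotient.mkₐ ℂ I)) := by
    apply MvPolynomial.algHom_ext
    intro i
    exact h i
  refine AlgHom.ext fun k => ?_
  obtain ⟨p, q, -, rfl⟩ := IsFractionRing.div_surjective (MvPolynomial (Fin n) ℂ ⧸ I) k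
  obtain ⟨p, rfl⟩ := Ideal.Quotient.mk_surjective p
  obtain ⟨q, rfl⟩ := Ideal.Quotient.mk_surjective q
  rw [map_div₀, map_div₀]
  congr 1
  · exact DFunLike.congr_fun h2 p
  · exact DFunLike.congr_fun h2 q

lemma exists_aut {n : ℕ} (I : Ideal (MvPolynomial (Fin n) ℂ))
    [IsDomain (MvPolynomial (Fin n) ℂ ⧸ I)] (e : Fin n → ℂ) (he : ∀ i, e i ^ 3 = 1)
    (hI : ∀ p ∈ I, aeval (fun i => e i • (X i : MvPolynomial (Fin n) ℂ)) p ∈ I)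
    (i₀ : Fin n) (hi₀ : e i₀ ≠ 1) (hX : clsI I (X i₀) ≠ 0) :
    ∃ σ : FractionRing (MvPolynomial (Fin n) ℂ ⧸ I) ≃ₐ[ℂ]
        FractionRing (MvPolynomial (Fin n) ℂ ⧸ I),
      orderOf σ = 3 ∧ ∀ i, σ (clsI I (X i)) = e i • clsI I (X i) := by
  let g : (MvPolynomial (Fin n) ℂ ⧸ I) →ₐ[ℂ] (MvPolynomial (Fin n) ℂ ⧸ I) :=
    Ideal.Quotient.liftₐ I ((Ideal.Quotient.mkₐ ℂ I).comp
      (aeval (fun i => e i • (X i : MvPolynomial (Fin n) ℂ)))) (by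
        intro p hp
        exact Ideal.Quotient.eq_zero_iff_mem.mpr (hI p hp))
  have hg : ∀ i, g (Ideal.Quotient.mk I (X i)) = e i • Ideal.Quotient.mk I (X i) := by
    intro i
    change (Ideal.Quotient.mkₐ ℂ I) (aeval _ (X i)) = _
    rw [aeval_X, map_smul]
    rfl
  have hggg : g.comp (g.comp g) = AlgHom.id ℂ _ := by
    apply Ideal.Quotient.algHom_ext
    apply MvPolynomial.algHom_ext
    intro i
    change g (g (g (Ideal.Quotient.mk I (X i)))) = Ideal.Quotient.mk I (X i)
    rw [hg, map_smul, hg, map_smul, map_smul, hg, smul_smul, smul_smul]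
    have := he i
    rw [show e i * e i * e i = 1 by rw [← this]; ring, one_smul]
  let G : (MvPolynomial (Fin n) ℂ ⧸ I) ≃ₐ[ℂ] (MvPolynomial (Fin n) ℂ ⧸ I) :=
    AlgEquiv.ofAlgHom g (g.comp g) hggg hggg
  let σ : FractionRing (MvPolynomial (Fin n) ℂ ⧸ I) ≃ₐ[ℂ]
        FractionRing (MvPolynomial (Fin n) ℂ ⧸ I) :=
    IsFractionRing.algEquivOfAlgEquiv G
  have hσ : ∀ i, σ (clsI I (X i)) = e i • clsI I (X i) := by
    intro i
    have h1 : σ (clsI I (X i)) = algebraMap (MvPolynomial (Fin n) ℂ ⧸ I)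
        (FractionRing (MvPolynomial (Fin n) ℂ ⧸ I)) (g (Ideal.Quotient.mk I (X i))) :=
      IsFractionRing.algEquivOfAlgEquiv_algebraMap G _
    rw [h1, hg]
    exact map_smul (IsScalarTower.toAlgHom ℂ (MvPolynomial (Fin n) ℂ ⧸ I)
        (FractionRing (MvPolynomial (Fin n) ℂ ⧸ I))) (e i) (Ideal.Quotient.mk I (X i))
  refine ⟨σ, ?_, hσ⟩
  apply orderOf_eq_prime
  · have : (σ ^ 3).toAlgHom = AlgHom.id ℂ _ := by
      apply algHom_ext_clsI
      intro i
      change σ (σ (σ (clsI I (X i)))) = clsI I (X i)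
      rw [hσ, map_smul, hσ, map_smul, map_smul, hσ, smul_smul, smul_smul]
      have := he i
      rw [show e i * e i * e i = 1 by rw [← this]; ring, one_smul]
    exact AlgEquiv.ext fun k => DFunLike.congr_fun this k
  · intro h1
    have := hσ i₀
    rw [h1] at this
    change clsI I (X i₀) = _ at this
    have h2 : (e i₀ - 1) • clsI I (X i₀) = 0 := by
      rw [sub_smul, ← this, one_smul, sub_self]
    rcases smul_eq_zero.mp h2 with h | h
    · exact hi₀ (sub_eq_zero.mp h)
    · exact hX h

/-- Injectivity through transcendence degree. -/
lemma inj_of_trdeg {S K : Type} [CommRing S] [IsDomain S] [Algebra ℂ S] [Field K] [Algebra ℂ K]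
    (f : S →ₐ[ℂ] K) (x : Fin 2 → S)
    (hS : ∀ s : S, IsAlgebraic (Algebra.adjoin ℂ (Set.range x)) s)
    (hK : ∀ s : K, IsAlgebraic (Algebra.adjoin ℂ (Set.range (f ∘ x))) s)
    (y : Fin 2 → K) (hy : AlgebraicIndependent ℂ y) : Function.Injective f := by
  have : Algebra.IsAlgebraic (Algebra.adjoin ℂ (Set.range (f ∘ x))) K := ⟨hK⟩
  have htr : IsTranscendenceBasis ℂ (f ∘ x) :=
    Algebra.IsAlgebraic.isTranscendenceBasis_of_le_trdeg_of_finite ℂ (f ∘ x)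
      hy.cardinalMk_le_trdeg
  have hind : AlgebraicIndependent ℂ (f ∘ x) := htr.1
  rw [injective_iff_map_eq_zero]
  intro s hs
  by_contra hne
  have h1 := Ideal.comap_ne_bot_of_algebraic_mem (R := Algebra.adjoin ℂ (Set.range x))
    (I := RingHom.ker f) hne hs (hS s)
  apply h1
  rw [eq_bot_iff]
  rintro ⟨r, hr⟩ hr0
  have hr1 : f r = 0 := hr0
  rw [Algebra.adjoin_range_eq_range_aeval] at hr
  obtain ⟨p, rfl⟩ := hr
  have h3 : aeval (f ∘ x) p = 0 := by
    rw [← hr1]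
    change _ = f (aeval x p)
    exact (MvPolynomial.comp_aeval_apply x f p).symm
  have h4 : p = 0 := hind (by rw [h3, map_zero])
  subst h4
  simp
  rfl

lemma cube_prime {R : Type*} [CommRing R] [IsDomain R] [UniqueFactorizationMonoid R] (p q : R)
    (hp : Prime p) (hpq : p ∣ q) (hq : ¬ p ^ 2 ∣ q) :
    Prime (Polynomial.X ^ 3 - Polynomial.C q : Polynomial R) := by
  have hm : (Polynomial.X ^ 3 - Polynomial.C q : Polynomial R).Monic :=
    Polynomial.monic_X_pow_sub_C _ (by norm_num)
  have hd : (Polynomial.X ^ 3 - Polynomial.C q : Polynomial R).degree = 3 :=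
    Polynomial.degree_X_pow_sub_C (by norm_num) _
  refine Irreducible.prime (Polynomial.irreducible_of_eisenstein_criterion (P := Ideal.span {p})
    ((Ideal.span_singleton_prime hp.ne_zero).mpr hp) ?_ ?_ ?_ ?_ hm.isPrimitive)
  · rw [hm.leadingCoeff, ← Ideal.eq_top_iff_one, Ideal.span_singleton_eq_top]
    exact hp.not_isUnit
  · intro n hn
    rw [hd] at hn
    have hn' : n < 3 := by exact_mod_cast hn
    rw [Polynomial.coeff_sub, Polynomial.coeff_X_pow, if_neg (by omega), zero_sub,
      Ideal.neg_mem_iff, Polynomial.coeff_C, Ideal.mem_span_singleton]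
    split_ifs
    · exact hpq
    · exact dvd_zero _
  · rw [hd]; norm_num
  · simp only [Polynomial.coeff_sub, Polynomial.coeff_X_pow, Polynomial.coeff_C]
    norm_num
    rw [Ideal.span_singleton_pow, Ideal.mem_span_singleton]
    exact hq

lemma prime_of_map_prime {R R' : Type*} [CommRing R] [CommRing R'] (f : R →+* R')
    (hf : Function.Injective f) (g : Polynomial R) (hg : g.Monic) (hp : Prime (g.map f)) :
    Prime g := by
  refine ⟨?_, ?_, ?_⟩
  · rintro rfl
    exact hp.ne_zero (by simp)
  · intro h
    exact hp.not_isUnit (h.map (Polynomial.mapRingHom f))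
  · intro p q h
    have h2 : g.map f ∣ p.map f * q.map f := by
      rw [← Polynomial.map_mul]
      exact Polynomial.map_dvd f h
    rcases hp.dvd_or_dvd h2 with h | h
    · left; exact (Polynomial.map_dvd_map f hf hg).mp h
    · right; exact (Polynomial.map_dvd_map f hf hg).mp h

lemma pS_prime (a b c : ℂ) (ha0 : a ≠ 0) (ha1 : a ≠ 1) : Prime (pS a b c) := by
  rw [← MulEquiv.prime_iff (finSuccEquiv ℂ 2)]
  let u1 : MvPolynomial (Fin 2) ℂ := 1 + X 0 + X 1
  let v1 : MvPolynomial (Fin 2) ℂ := C a + C b * X 0 + C c * X 1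
  let Q : MvPolynomial (Fin 2) ℂ := u1 * v1 * (v1 - u1)
  have hX1 : finSuccEquiv ℂ 2 (X 1) = Polynomial.C (X 0) := finSuccEquiv_X_succ (j := 0)
  have hX2 : finSuccEquiv ℂ 2 (X 2) = Polynomial.C (X 1) := finSuccEquiv_X_succ (j := 1)
  have hC : ∀ r : ℂ, finSuccEquiv ℂ 2 (C r) = Polynomial.C (C r) := fun r =>
    (finSuccEquiv ℂ 2).commutes r
  have heq : finSuccEquiv ℂ 2 (pS a b c) =
      Polynomial.C Q * Polynomial.X ^ 3 + Polynomial.C (-(X 0 * X 1)) := by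
    simp only [pS, u₁S, v₁S, map_sub, map_mul, map_add, map_pow, map_one, hX1, hX2, hC,
      finSuccEquiv_X_zero, Q, u1, v1, map_neg]
    ring
  rw [heq]
  have hQ0 : eval (fun _ => 0) Q ≠ 0 := by
    simp [Q, u1, v1, ha0, sub_ne_zero.mpr ha1]
  have hQne : Q ≠ 0 := by
    intro h; rw [h] at hQ0; simp at hQ0
  have hXQ : ∀ i, ¬ (X i ∣ Q) := by
    rintro i ⟨r, hr⟩
    apply hQ0
    rw [hr]; simp
  have hd : (Polynomial.C Q * Polynomial.X ^ 3 + Polynomial.C (-(X 0 * X 1))).degree = 3 := by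
    rw [Polynomial.degree_add_C] <;> rw [Polynomial.degree_C_mul_X_pow _ hQne]
    · rfl
    · norm_num
  have hlc : (Polynomial.C Q * Polynomial.X ^ 3 + Polynomial.C (-(X 0 * X 1))).leadingCoeff = Q := by
    rw [Polynomial.leadingCoeff, Polynomial.natDegree_eq_of_degree_eq_some hd]
    simp
  have hc0 : (Polynomial.C Q * Polynomial.X ^ 3 + Polynomial.C (-(X 0 * X 1))).coeff 0 =
      -(X 0 * X 1) := by
    simp
  refine Irreducible.prime (Polynomial.irreducible_of_eisenstein_criterion
    (P := Ideal.span {(X 0 : MvPolynomial (Fin 2) ℂ)})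
    ((Ideal.span_singleton_prime X_prime.ne_zero).mpr X_prime) ?_ ?_ ?_ ?_ ?_)
  · rw [hlc, Ideal.mem_span_singleton]
    exact hXQ 0
  · intro n hn
    rw [hd] at hn
    have hn' : n < 3 := by exact_mod_cast hn
    rw [Polynomial.coeff_add, Polynomial.coeff_C_mul, Polynomial.coeff_X_pow, if_neg (by omega),
      mul_zero, zero_add, Polynomial.coeff_C, Ideal.mem_span_singleton]
    split_ifs
    · exact (dvd_neg).mpr (dvd_mul_right _ _)
    · exact dvd_zero _
  · rw [hd]; norm_num
  · rw [hc0, Ideal.span_singleton_pow, Ideal.mem_span_singleton, dvd_neg, pow_two]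
    intro h
    have h2 := (mul_dvd_mul_iff_left (X_prime (R := ℂ) (i := (0 : Fin 2))).ne_zero).mp h
    obtain ⟨r, hr⟩ := h2
    have := congrArg (eval ![0, 1]) hr
    simp at this
  · intro r hr
    rw [Polynomial.C_dvd_iff_dvd_coeff] at hr
    have h0 : r ∣ X 0 * X 1 := by
      have := hr 0
      rw [hc0] at this
      exact (dvd_neg).mp this
    have h3 : r ∣ Q := by
      have := hr 3
      simpa [Polynomial.coeff_C] using this
    have hrel : ∀ i : Fin 2, IsRelPrime (X i) Q := fun i =>
      (X_prime.irreducible.isRelPrime_iff_not_dvd).mpr (hXQ i)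
    exact ((hrel 0).mul_left (hrel 1)) h0 h3

/-- `P` as univariate polynomial -/
def P1 (a b c : ℂ) : Polynomial ℂ :=
  Polynomial.X * (Polynomial.X - 1) * (Polynomial.C (b - c)⁻¹ * (Polynomial.C b - Polynomial.X)) *
    (Polynomial.C (c - b)⁻¹ * (Polynomial.C c - Polynomial.X)) *
    ((Polynomial.C (b - c)⁻¹ * (Polynomial.C b - Polynomial.X)) * Polynomial.C (b₁ a b c) -
      (Polynomial.C (c - b)⁻¹ * (Polynomial.C c - Polynomial.X)) * Polynomial.C (a₁ a b c))

lemma P1_prime (a b c : ℂ) (ha0 : a ≠ 0) (hb0 : b ≠ 0) (hc0 : c ≠ 0) (hbc : b ≠ c) :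
    Prime (Polynomial.X ^ 3 - Polynomial.C (P1 a b c) : Polynomial (Polynomial ℂ)) := by
  have h1 : b - c ≠ 0 := sub_ne_zero.mpr hbc
  have h2 : c - b ≠ 0 := sub_ne_zero.mpr hbc.symm
  refine cube_prime Polynomial.X _ Polynomial.prime_X ?_ ?_
  · simp only [P1, mul_assoc]
    exact dvd_mul_right _ _
  · rw [P1, pow_two]
    simp only [mul_assoc]
    rw [mul_dvd_mul_iff_left Polynomial.X_ne_zero]
    rintro ⟨r, hr⟩
    have := congrArg (Polynomial.eval 0) hr
    simp [a₁, b₁, h1, h2, hb0, hc0] at this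
    field_simp at this
    apply ha0
    have h3 : a * (b - c) = 0 := by linear_combination this
    exact (mul_eq_zero.mp h3).resolve_right h1

lemma F1_prime (B : Type*) [CommRing B] [IsDomain B] :
    Prime (Polynomial.X ^ 3 - Polynomial.C (Polynomial.X * (Polynomial.X + 1)) :
      Polynomial (Polynomial B)) := by
  refine prime_of_map_prime (Polynomial.mapRingHom (algebraMap B (FractionRing B)))
    (Polynomial.map_injective _ (IsFractionRing.injective B (FractionRing B))) _
    (Polynomial.monic_X_pow_sub_C _ (by norm_num)) ?_
  have : (Polynomial.X ^ 3 - Polynomial.C (Polynomial.X * (Polynomial.X + 1)) :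
      Polynomial (Polynomial B)).map (Polynomial.mapRingHom (algebraMap B (FractionRing B))) =
      Polynomial.X ^ 3 - Polynomial.C (Polynomial.X * (Polynomial.X + 1)) := by
    simp
  rw [this]
  refine cube_prime Polynomial.X _ Polynomial.prime_X (dvd_mul_right _ _) ?_
  rw [pow_two, mul_dvd_mul_iff_left Polynomial.X_ne_zero]
  rintro ⟨r, hr⟩
  have := congrArg (Polynomial.eval 0) hr
  simp at this

lemma R2_domain (a b c : ℂ) (ha0 : a ≠ 0) (hb0 : b ≠ 0) (hc0 : c ≠ 0) (hbc : b ≠ c) :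
    IsDomain (HSurf2 (pC₁ a b c) pF₁4) := by
  let f1 : Polynomial (Polynomial ℂ) := Polynomial.X ^ 3 - Polynomial.C (P1 a b c)
  let B1 := AdjoinRoot f1
  have : IsDomain B1 := AdjoinRoot.isDomain_of_prime (P1_prime a b c ha0 hb0 hc0 hbc)
  let f2 : Polynomial (Polynomial B1) :=
    Polynomial.X ^ 3 - Polynomial.C (Polynomial.X * (Polynomial.X + 1))
  let B2 := AdjoinRoot f2
  have hB2 : IsDomain B2 := AdjoinRoot.isDomain_of_prime (F1_prime B1)
  let I := Ideal.span {pC₁ a b c, pF₁4}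
  let m : MvPolynomial (Fin 4) ℂ →+* HSurf2 (pC₁ a b c) pF₁4 := Ideal.Quotient.mk I
  -- embedding of B1 in B2
  let j : B1 →+* B2 := (AdjoinRoot.of f2).comp Polynomial.C
  let i1 : Polynomial ℂ →+* B1 := AdjoinRoot.of f1
  let zz : B2 := j (i1 Polynomial.X)
  let ww : B2 := j (AdjoinRoot.root f1)
  let tt : B2 := AdjoinRoot.of f2 Polynomial.X
  let xx : B2 := AdjoinRoot.root f2
  let ι : ℂ →+* B2 := j.comp (i1.comp Polynomial.C)
  let Θ : MvPolynomial (Fin 4) ℂ →+* B2 := eval₂Hom ι ![zz, ww, tt, xx]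
  have hw : ww ^ 3 = (j.comp i1) (P1 a b c) := by
    have h := AdjoinRoot.eval₂_root f1
    simp only [f1, Polynomial.eval₂_sub, Polynomial.eval₂_pow, Polynomial.eval₂_X,
      Polynomial.eval₂_C] at h
    have h' := congrArg j (sub_eq_zero.mp h)
    rw [map_pow] at h'
    exact h'
  have hx : xx ^ 3 = tt * (tt + 1) := by
    have h : Polynomial.eval₂ (AdjoinRoot.of f2) xx (Polynomial.X ^ 3 -
        Polynomial.C (Polynomial.X * (Polynomial.X + 1))) = 0 := AdjoinRoot.eval₂_root f2
    rw [Polynomial.eval₂_sub, Polynomial.eval₂_pow, Polynomial.eval₂_X,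
      Polynomial.eval₂_C, map_mul, map_add, map_one] at h
    exact sub_eq_zero.mp h
  have hP : Θ (P4 a b c) = (j.comp i1) (P1 a b c) := by
    simp [Θ, P4, P1, A₁4, B₁4, zz, ι]
  have hΘ : ∀ p ∈ I, Θ p = 0 := by
    intro p hp
    have : I ≤ RingHom.ker Θ := by
      rw [Ideal.span_le]
      rintro q (rfl | rfl)
      · change Θ (pC₁ a b c) = 0
        rw [pC₁, map_sub, hP, ← hw]
        simp [Θ]
      · change Θ pF₁4 = 0
        simp [pF₁4, Θ, hx]
    exact this hp
  let θ : HSurf2 (pC₁ a b c) pF₁4 →+* B2 := Ideal.Quotient.lift I Θ hΘ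
  -- left inverse
  have hmC : m (pC₁ a b c) = 0 := Ideal.Quotient.eq_zero_iff_mem.mpr (Ideal.subset_span (by simp))
  have hmF : m pF₁4 = 0 := Ideal.Quotient.eq_zero_iff_mem.mpr (Ideal.subset_span (by simp))
  let e0 : Polynomial ℂ →+* HSurf2 (pC₁ a b c) pF₁4 :=
    Polynomial.eval₂RingHom (m.comp C) (m (X 0))
  have he0P : e0 (P1 a b c) = m (P4 a b c) := by
    simp [e0, P4, P1, A₁4, B₁4]
  have hE1 : Polynomial.eval₂ e0 (m (X 1)) f1 = 0 := by
    have h : m (X 1 ^ 3 - P4 a b c) = 0 := hmC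
    rw [map_sub, map_pow] at h
    simp only [f1, Polynomial.eval₂_sub, Polynomial.eval₂_pow, Polynomial.eval₂_X,
      Polynomial.eval₂_C]
    rw [he0P, h]
  let e1 : B1 →+* HSurf2 (pC₁ a b c) pF₁4 := AdjoinRoot.lift e0 (m (X 1)) hE1
  have e1of : ∀ y, e1 (i1 y) = e0 y := fun y => AdjoinRoot.lift_of hE1
  have e1root : e1 (AdjoinRoot.root f1) = m (X 1) := AdjoinRoot.lift_root hE1
  let e2 : Polynomial B1 →+* HSurf2 (pC₁ a b c) pF₁4 :=
    Polynomial.eval₂RingHom e1 (m (X 2))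
  have e2X : e2 Polynomial.X = m (X 2) := Polynomial.eval₂_X _ _
  have e2C : ∀ y, e2 (Polynomial.C y) = e1 y := fun y => Polynomial.eval₂_C _ _
  have hE2 : Polynomial.eval₂ e2 (m (X 3)) f2 = 0 := by
    have h : m (X 3 ^ 3 - X 2 * (X 2 + 1)) = 0 := hmF
    rw [map_sub, map_pow, map_mul, map_add, map_one] at h
    change Polynomial.eval₂ e2 (m (X 3)) (Polynomial.X ^ 3 -
        Polynomial.C (Polynomial.X * (Polynomial.X + 1))) = 0
    rw [Polynomial.eval₂_sub, Polynomial.eval₂_pow, Polynomial.eval₂_X,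
      Polynomial.eval₂_C, map_mul, map_add, map_one, e2X, h]
  let e3 : B2 →+* HSurf2 (pC₁ a b c) pF₁4 := AdjoinRoot.lift e2 (m (X 3)) hE2
  have e3of : ∀ y, e3 (AdjoinRoot.of f2 y) = e2 y := fun y => AdjoinRoot.lift_of hE2
  have e3root : e3 (AdjoinRoot.root f2) = m (X 3) := AdjoinRoot.lift_root hE2
  have hj : ∀ y, e3 (j y) = e1 y := by
    intro y
    exact (e3of _).trans (e2C y)
  have hcomp : e3.comp θ = RingHom.id _ := by
    apply Ideal.Quotient.ringHom_ext
    apply MvPolynomial.ringHom_ext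
    · intro r
      change e3 (Θ (C r)) = m (C r)
      simp only [Θ, coe_eval₂Hom, eval₂_C, ι, RingHom.comp_apply, hj]
      rw [e1of]
      simp [e0]
    · intro i
      change e3 (Θ (X i)) = m (X i)
      fin_cases i
      · simp only [Θ, coe_eval₂Hom, eval₂_X]
        change e3 zz = m (X 0)
        rw [hj, e1of]
        simp [e0]
      · simp only [Θ, coe_eval₂Hom, eval₂_X]
        change e3 ww = m (X 1)
        rw [hj, e1root]
      · simp only [Θ, coe_eval₂Hom, eval₂_X]
        change e3 tt = m (X 2)
        rw [e3of, e2X]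
      · simp only [Θ, coe_eval₂Hom, eval₂_X]
        change e3 xx = m (X 3)
        exact e3root
  have hinj : Function.Injective θ := by
    apply Function.LeftInverse.injective (g := e3)
    intro y
    exact DFunLike.congr_fun hcomp y
  exact hinj.isDomain θ

lemma exists_cube_root (r : ℂ) : ∃ s : ℂ, s ^ 3 = r :=
  IsAlgClosed.exists_pow_nat_eq r (by norm_num)

lemma R2_ne_zero (a b c : ℂ) (p : MvPolynomial (Fin 2) ℂ) (hp : p ≠ 0) :
    (Ideal.Quotient.mk (Ideal.span {pC₁ a b c, pF₁4})) (aeval ![X 0, X 2] p) ≠ 0 := by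
  intro h
  apply hp
  apply MvPolynomial.funext
  intro y
  obtain ⟨w, hw⟩ := exists_cube_root (eval ![y 0, 0, y 1, 0] (P4 a b c))
  obtain ⟨x, hx⟩ := exists_cube_root (y 1 * (y 1 + 1))
  have hP : eval ![y 0, 0, y 1, 0] (P4 a b c) = eval ![y 0, w, y 1, x] (P4 a b c) := by
    simp [P4, A₁4, B₁4]
  have hle : Ideal.span {pC₁ a b c, pF₁4} ≤ RingHom.ker (eval ![y 0, w, y 1, x]) := by
    rw [Ideal.span_le]
    rintro q (rfl | rfl)
    · change eval ![y 0, w, y 1, x] (pC₁ a b c) = 0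
      rw [pC₁, map_sub, ← hP, ← hw]
      simp
    · change eval ![y 0, w, y 1, x] pF₁4 = 0
      simp [pF₁4, hx]
  have h1 : eval ![y 0, w, y 1, x] (aeval ![X 0, X 2] p) = 0 :=
    hle (Ideal.Quotient.eq_zero_iff_mem.mp h)
  rw [map_zero, ← h1]
  have h2 : (eval y : MvPolynomial (Fin 2) ℂ →+* ℂ) =
      (eval ![y 0, w, y 1, x]).comp (aeval ![X 0, X 2] : MvPolynomial (Fin 2) ℂ →ₐ[ℂ] MvPolynomial (Fin 4) ℂ).toRingHom := by
    apply MvPolynomial.ringHom_ext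
    · intro r; simp
    · intro i
      fin_cases i <;> simp
  exact DFunLike.congr_fun h2 p

lemma field_rel {K : Type*} [Field K] (a b c z t w x A B D u1 U V W : K)
    (hbc : b - c ≠ 0)
    (hA : A = (b - z) / (b - c)) (hB : B = (z - c) / (b - c)) (hD : D = (z - a) / (b - c))
    (hA0 : A ≠ 0) (hB0 : B ≠ 0) (hw0 : w ≠ 0) (hu0 : u1 ≠ 0)
    (hw : w ^ 3 = z * (z - 1) * A * B * D) (hx : x ^ 3 = t * (t + 1))
    (hU : U = D * (t + 1) / A) (hV : V = D * t / B)
    (hu1 : u1 = 1 + U + V) (hW : W = D * x / (w * u1)) :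
    a + b * U + c * V = z * u1 ∧
    W ^ 3 * u1 * (z * u1) * (z * u1 - u1) = U * V := by
  have hbz : b - z ≠ 0 := by
    intro h; apply hA0; rw [hA, h, zero_div]
  have hzc : z - c ≠ 0 := by
    intro h; apply hB0; rw [hB, h, zero_div]
  constructor
  · rw [hu1, hU, hV, hA, hB, hD]
    field_simp
    ring
  · have h1 : W ^ 3 * w ^ 3 * u1 ^ 3 = D ^ 3 * x ^ 3 := by
      rw [hW]; field_simp
    have hU' : U * A = D * (t + 1) := by rw [hU]; field_simp
    have hV' : V * B = D * t := by rw [hV]; field_simp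
    have hw3 : w ^ 3 ≠ 0 := pow_ne_zero _ hw0
    have hD0 : D ≠ 0 := by
      rintro rfl
      rw [mul_zero] at hw
      exact hw3 hw
    have h3 : A * B * D ≠ 0 := mul_ne_zero (mul_ne_zero hA0 hB0) hD0
    apply mul_left_cancel₀ h3
    rw [hw, hx] at h1
    linear_combination h1 - D * V * B * hU' - D * D * (t + 1) * hV'

set_option maxHeartbeats 4000000 in
lemma core (a b c : ℂ) (ha0 : a ≠ 0) (ha1 : a ≠ 1) (hab : a ≠ b) (hac : a ≠ c) (hbc : b ≠ c)
    {K : Type} [Field K] [Algebra ℂ K] (z w t x : K)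
    (hind : AlgebraicIndependent ℂ ![z, t])
    (hgen : ∀ F : IntermediateField ℂ K, z ∈ F → w ∈ F → t ∈ F → x ∈ F → ∀ k, k ∈ F)
    (A B D : K)
    (hA : A = algebraMap ℂ K (b - c)⁻¹ * (algebraMap ℂ K b - z))
    (hB : B = algebraMap ℂ K (c - b)⁻¹ * (algebraMap ℂ K c - z))
    (hD : D = A * algebraMap ℂ K (b₁ a b c) - B * algebraMap ℂ K (a₁ a b c))
    (hw : w ^ 3 = z * (z - 1) * A * B * D) (hx : x ^ 3 = t * (t + 1))
    (τ ρ : K ≃ₐ[ℂ] K) (hτz : τ z = z) (hτt : τ t = t) (hτw : τ w = (ω ^ 2 : ℂ) • w)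
    (hτx : τ x = (ω ^ 2 : ℂ) • x)
    (hρz : ρ z = z) (hρt : ρ t = t) (hρw : ρ w = (ω : ℂ) • w) (hρx : ρ x = x)
    (hdom : IsDomain (HSurf (pS a b c))) :
    ∃ f : FractionRing (HSurf (pS a b c)) →ₐ[ℂ] K,
      (∀ k, τ k = k ↔ k ∈ Set.range f) ∧
      ρ (f (cls (pS a b c) (X 0))) = (ω ^ 2 : ℂ) • f (cls (pS a b c) (X 0)) ∧
      ρ (f (cls (pS a b c) (X 1))) = f (cls (pS a b c) (X 1)) ∧
      ρ (f (cls (pS a b c) (X 2))) = f (cls (pS a b c) (X 2)) ∧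
      cls (pS a b c) (X 0) ≠ 0 := by
  have hne : ∀ p : MvPolynomial (Fin 2) ℂ, ∀ y : Fin 2 → ℂ, eval y p ≠ 0 →
      aeval ![z, t] p ≠ 0 := by
    intro p y hy h
    have : p = 0 := hind (by rw [h, map_zero])
    rw [this] at hy
    simp at hy
  have hbc' : b - c ≠ 0 := sub_ne_zero.mpr hbc
  have hcb' : c - b ≠ 0 := sub_ne_zero.mpr hbc.symm
  have hβbc : algebraMap ℂ K b - algebraMap ℂ K c ≠ 0 := by
    rw [← map_sub]; exact (map_ne_zero _).mpr hbc'
  have hβcb : algebraMap ℂ K c - algebraMap ℂ K b ≠ 0 := by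
    rw [← map_sub]; exact (map_ne_zero _).mpr hcb'
  have hzr : ∀ r : ℂ, z - algebraMap ℂ K r ≠ 0 := by
    intro r
    have := hne (X 0 - C r) ![r + 1, 0] (by simp)
    simpa using this
  have htr : ∀ r : ℂ, t - algebraMap ℂ K r ≠ 0 := by
    intro r
    have := hne (X 1 - C r) ![0, r + 1] (by simp)
    simpa using this
  have hz0 : z ≠ 0 := by simpa using hzr 0
  have hz1 : z - 1 ≠ 0 := by simpa using hzr 1
  have ht0 : t ≠ 0 := by simpa using htr 0
  have ht1 : t + 1 ≠ 0 := by simpa using htr (-1)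
  have hA' : A = (algebraMap ℂ K b - z) / (algebraMap ℂ K b - algebraMap ℂ K c) := by
    rw [hA, map_inv₀, map_sub]; field_simp
  have hB' : B = (z - algebraMap ℂ K c) / (algebraMap ℂ K b - algebraMap ℂ K c) := by
    rw [hB, map_inv₀, map_sub]; field_simp; ring
  have hD' : D = (z - algebraMap ℂ K a) / (algebraMap ℂ K b - algebraMap ℂ K c) := by
    rw [hD, hA', hB', a₁, b₁, map_div₀, map_div₀, map_sub, map_sub, map_sub, map_sub]
    field_simp
    ring
  have hA0 : A ≠ 0 := by
    rw [hA']
    refine div_ne_zero ?_ hβbc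
    rw [← neg_sub]
    exact neg_ne_zero.mpr (hzr b)
  have hB0 : B ≠ 0 := by
    rw [hB']
    exact div_ne_zero (hzr c) hβbc
  have hD0 : D ≠ 0 := by
    rw [hD']
    exact div_ne_zero (hzr a) hβbc
  have hw0 : w ≠ 0 := by
    rintro rfl
    have : z * (z - 1) * A * B * D ≠ 0 := by positivity
    exact this (by rw [← hw]; simp)
  have hx0 : x ≠ 0 := by
    rintro rfl
    have : t * (t + 1) ≠ 0 := by positivity
    exact this (by rw [← hx]; simp)
  obtain ⟨U, hU⟩ : ∃ U, U = D * (t + 1) / A := ⟨_, rfl⟩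
  obtain ⟨V, hV⟩ : ∃ V, V = D * t / B := ⟨_, rfl⟩
  obtain ⟨u1, hu1⟩ : ∃ u1, u1 = 1 + U + V := ⟨_, rfl⟩
  obtain ⟨W, hW⟩ : ∃ W, W = D * x / (w * u1) := ⟨_, rfl⟩
  have hu0 : u1 ≠ 0 := by
    have h1 := hne ((X 0 - C a) * X 1 * C (b - c) + (X 0 - C c) * C (b - a)) ![a, 0] (by
      simp [sub_ne_zero.mpr hac, sub_ne_zero.mpr hab.symm])
    intro h0
    apply h1
    have hbz : algebraMap ℂ K b - z ≠ 0 := by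
      rw [← neg_sub]
      exact neg_ne_zero.mpr (hzr b)
    have hzc := hzr c
    rw [hu1, hU, hV, hA', hB', hD'] at h0
    field_simp at h0
    simp
    linear_combination h0
  obtain ⟨hv1, hrel⟩ := field_rel _ _ _ z t w x A B D u1 U V W hβbc hA' hB' hD' hA0 hB0 hw0 hu0
    hw hx hU hV hu1 hW
  have hU0 : U ≠ 0 := by rw [hU]; positivity
  have hV0 : V ≠ 0 := by rw [hV]; positivity
  have hW0 : W ≠ 0 := by rw [hW]; positivity
  have hpS : aeval ![W, U, V] (pS a b c) = 0 := by
    simp only [pS, u₁S, v₁S, map_sub, map_mul, map_add, map_pow, map_one, aeval_X,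
      algHom_C, Matrix.cons_val]
    rw [hv1, ← hu1, hrel, sub_self]
  let f0 : HSurf (pS a b c) →ₐ[ℂ] K := Ideal.Quotient.liftₐ _ (aeval ![W, U, V]) (by
    intro p hp
    obtain ⟨q, rfl⟩ := Ideal.mem_span_singleton.mp hp
    rw [map_mul, hpS, zero_mul])
  let m : MvPolynomial (Fin 3) ℂ →ₐ[ℂ] HSurf (pS a b c) := Ideal.Quotient.mkₐ ℂ _
  have hf0 : ∀ p, f0 (m p) = aeval ![W, U, V] p := fun p => rfl
  have hfW : f0 (m (X 0)) = W := by rw [hf0]; simp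
  have hfU : f0 (m (X 1)) = U := by rw [hf0]; simp
  have hfV : f0 (m (X 2)) = V := by rw [hf0]; simp
  let xs : Fin 2 → HSurf (pS a b c) := ![m (X 1), m (X 2)]
  have hxs0 : m (X 1) ∈ Algebra.adjoin ℂ (Set.range xs) := Algebra.subset_adjoin ⟨0, rfl⟩
  have hxs1 : m (X 2) ∈ Algebra.adjoin ℂ (Set.range xs) := Algebra.subset_adjoin ⟨1, rfl⟩
  have hinj : Function.Injective f0 := by
    refine inj_of_trdeg f0 xs ?_ ?_ ![z, t] hind
    · have hwalg : IsAlgebraic (Algebra.adjoin ℂ (Set.range xs)) (m (X 0)) := by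
        let q : Algebra.adjoin ℂ (Set.range xs) :=
          (1 + ⟨_, hxs0⟩ + ⟨_, hxs1⟩) *
          (algebraMap ℂ _ a + algebraMap ℂ _ b * ⟨_, hxs0⟩ + algebraMap ℂ _ c * ⟨_, hxs1⟩) *
          ((algebraMap ℂ _ a + algebraMap ℂ _ b * ⟨_, hxs0⟩ + algebraMap ℂ _ c * ⟨_, hxs1⟩) -
            (1 + ⟨_, hxs0⟩ + ⟨_, hxs1⟩))
        let n : Algebra.adjoin ℂ (Set.range xs) := ⟨_, hxs0⟩ * ⟨_, hxs1⟩
        have hq : (q : HSurf (pS a b c)) = m (u₁S * v₁S a b c * (v₁S a b c - u₁S)) := by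
          simp only [u₁S, v₁S, map_mul, map_add, map_sub, map_one, algHom_C]
          rfl
        have hn : (n : HSurf (pS a b c)) = m (X 1 * X 2) := by
          rw [map_mul]; rfl
        have hmS : m (pS a b c) = 0 :=
          Ideal.Quotient.eq_zero_iff_mem.mpr (Ideal.mem_span_singleton_self _)
        have hq0 : q ≠ 0 := by
          intro h
          have h2 : f0 q = 0 := by rw [h]; simp
          rw [hq, hf0] at h2
          simp only [u₁S, v₁S, map_sub, map_mul, map_add, map_one, aeval_X,
            algHom_C, Matrix.cons_val] at h2
          rw [hv1, ← hu1] at h2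
          have h3 : u1 * (z * u1) * (z * u1 - u1) = u1 ^ 3 * z * (z - 1) := by ring
          rw [h3] at h2
          have : u1 ^ 3 * z * (z - 1) ≠ 0 := by positivity
          exact this h2
        refine ⟨Polynomial.C q * Polynomial.X ^ 3 - Polynomial.C n, ?_, ?_⟩
        · intro h
          have := congrArg (fun p => Polynomial.coeff p 3) h
          simp at this
          exact hq0 this
        · rw [map_sub, map_mul, map_pow, Polynomial.aeval_C, Polynomial.aeval_C, Polynomial.aeval_X]
          change (q : HSurf (pS a b c)) * m (X 0) ^ 3 - (n : HSurf (pS a b c)) = 0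
          have hpp : (u₁S * v₁S a b c * (v₁S a b c - u₁S)) * X 0 ^ 3 - X 1 * X 2 = pS a b c := by
            rw [pS]; ring
          rw [hq, hn, ← hmS]
          refine Eq.trans ?_ (congrArg m hpp)
          rw [map_sub m, map_mul m _ (X 0 ^ 3), map_pow m]
      intro s
      obtain ⟨p, rfl⟩ := Ideal.Quotient.mk_surjective s
      change IsAlgebraic _ (m p)
      induction p using MvPolynomial.induction_on with
      | C r =>
        rw [algHom_C]
        exact isAlgebraic_algebraMap (algebraMap ℂ (Algebra.adjoin ℂ (Set.range xs)) r)
      | add p q hp hq => rw [map_add]; exact hp.add hq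
      | mul_X p i hp =>
        rw [map_mul]
        refine hp.mul ?_
        fin_cases i
        · exact hwalg
        · exact isAlgebraic_algebraMap (⟨_, hxs0⟩ : Algebra.adjoin ℂ (Set.range xs))
        · exact isAlgebraic_algebraMap (⟨_, hxs1⟩ : Algebra.adjoin ℂ (Set.range xs))
    · let R := Algebra.adjoin ℂ (Set.range (f0 ∘ xs))
      have hRU : U ∈ R := Algebra.subset_adjoin ⟨0, hfU⟩
      have hRV : V ∈ R := Algebra.subset_adjoin ⟨1, hfV⟩
      let F : IntermediateField ℂ K :=
        { carrier := {k | IsAlgebraic R k}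
          mul_mem' := fun h1 h2 => h1.mul h2
          add_mem' := fun h1 h2 => h1.add h2
          algebraMap_mem' := fun r => isAlgebraic_algebraMap (algebraMap ℂ R r)
          inv_mem' := fun k hk => hk.inv }
      have hFU : U ∈ F := isAlgebraic_algebraMap (⟨U, hRU⟩ : R)
      have hFV : V ∈ F := isAlgebraic_algebraMap (⟨V, hRV⟩ : R)
      have hFu1 : u1 ∈ F := by
        rw [hu1]; exact add_mem (add_mem (one_mem _) hFU) hFV
      have hFz : z ∈ F := by
        have : z = (algebraMap ℂ K a + algebraMap ℂ K b * U + algebraMap ℂ K c * V) / u1 := by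
          rw [hv1]; field_simp
        rw [this]
        exact div_mem (add_mem (add_mem (F.algebraMap_mem _) (mul_mem (F.algebraMap_mem _) hFU))
          (mul_mem (F.algebraMap_mem _) hFV)) hFu1
      have hFA : A ∈ F := by
        rw [hA]; exact mul_mem (F.algebraMap_mem _) (sub_mem (F.algebraMap_mem _) hFz)
      have hFB : B ∈ F := by
        rw [hB]; exact mul_mem (F.algebraMap_mem _) (sub_mem (F.algebraMap_mem _) hFz)
      have hFD : D ∈ F := by
        rw [hD]; exact sub_mem (mul_mem hFA (F.algebraMap_mem _)) (mul_mem hFB (F.algebraMap_mem _))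
      have hFt : t ∈ F := by
        have : t = V * B / D := by rw [hV]; field_simp
        rw [this]
        exact div_mem (mul_mem hFV hFB) hFD
      have hFw : w ∈ F := by
        have h3 : w ^ 3 ∈ F := by
          rw [hw]
          exact mul_mem (mul_mem (mul_mem (mul_mem hFz (sub_mem hFz (one_mem _))) hFA) hFB) hFD
        exact IsAlgebraic.of_pow (n := 3) (by norm_num) h3
      have hFx : x ∈ F := by
        have h3 : x ^ 3 ∈ F := by
          rw [hx]
          exact mul_mem hFt (add_mem hFt (one_mem _))
        exact IsAlgebraic.of_pow (n := 3) (by norm_num) h3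
      exact fun k => hgen F hFz hFw hFt hFx k
  let f : FractionRing (HSurf (pS a b c)) →ₐ[ℂ] K := IsFractionRing.liftAlgHom hinj
  have hf : ∀ p, f (cls (pS a b c) p) = f0 (m p) := by
    intro p
    exact IsFractionRing.lift_algebraMap hinj _
  have hf_W : f (cls (pS a b c) (X 0)) = W := by rw [hf, hfW]
  have hf_U : f (cls (pS a b c) (X 1)) = U := by rw [hf, hfU]
  have hf_V : f (cls (pS a b c) (X 2)) = V := by rw [hf, hfV]
  -- actions of the automorphisms
  have hact : ∀ σ : K ≃ₐ[ℂ] K, σ z = z → σ t = t →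
      σ A = A ∧ σ B = B ∧ σ D = D ∧ σ U = U ∧ σ V = V ∧ σ u1 = u1 := by
    intro σ h1 h2
    have hσA : σ A = A := by simp [hA, h1]
    have hσB : σ B = B := by simp [hB, h1]
    have hσD : σ D = D := by simp [hD, hσA, hσB]
    have hσU : σ U = U := by simp [hU, hσA, hσD, h2]
    have hσV : σ V = V := by simp [hV, hσB, hσD, h2]
    exact ⟨hσA, hσB, hσD, hσU, hσV, by simp [hu1, hσU, hσV]⟩
  obtain ⟨hτA, hτB, hτD, hτU, hτV, hτu1⟩ := hact τ hτz hτt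
  obtain ⟨hρA, hρB, hρD, hρU, hρV, hρu1⟩ := hact ρ hρz hρt
  have hωK : (algebraMap ℂ K ω) ^ 3 = 1 := by rw [← map_pow, omega_pow_three, map_one]
  have hωK0 : algebraMap ℂ K ω ≠ 0 := by
    intro h; rw [h] at hωK; norm_num at hωK
  have hωsum : 1 + algebraMap ℂ K ω + (algebraMap ℂ K ω) ^ 2 = 0 := by
    rw [← map_pow, ← map_one (algebraMap ℂ K), ← map_add, ← map_add, omega_sum, map_zero]
  rw [Algebra.smul_def, map_pow] at hτw hτx
  rw [Algebra.smul_def] at hρw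
  have hτW : τ W = W := by
    rw [hW, map_div₀, map_mul, map_mul, hτD, hτx, hτw, hτu1]
    field_simp
  have hρW : ρ W = (algebraMap ℂ K ω) ^ 2 * W := by
    rw [hW, map_div₀, map_mul, map_mul, hρD, hρx, hρw, hρu1]
    field_simp
    linear_combination - hωK
  have hτf : τ.toAlgHom.comp f = f := by
    apply algHom_ext_clsI
    intro i
    change τ (f (cls (pS a b c) (X i))) = f (cls (pS a b c) (X i))
    fin_cases i
    · change τ (f (cls (pS a b c) (X 0))) = f (cls (pS a b c) (X 0))
      rw [hf_W, hτW]
    · change τ (f (cls (pS a b c) (X 1))) = f (cls (pS a b c) (X 1))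
      rw [hf_U, hτU]
    · change τ (f (cls (pS a b c) (X 2))) = f (cls (pS a b c) (X 2))
      rw [hf_V, hτV]
  refine ⟨f, ?_, ?_, ?_, ?_, ?_⟩
  · intro k
    constructor
    swap
    · rintro ⟨s, rfl⟩
      exact DFunLike.congr_fun hτf s
    intro hk
    let F : IntermediateField ℂ K := f.fieldRange
    have hFτ : ∀ r ∈ F, τ r = r := by
      rintro _ ⟨s, rfl⟩
      exact DFunLike.congr_fun hτf s
    have hFU : U ∈ F := ⟨_, hf_U⟩
    have hFV : V ∈ F := ⟨_, hf_V⟩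
    have hFW : W ∈ F := ⟨_, hf_W⟩
    have hFu1 : u1 ∈ F := by
      rw [hu1]; exact add_mem (add_mem (one_mem _) hFU) hFV
    have hFz : z ∈ F := by
      have : z = (algebraMap ℂ K a + algebraMap ℂ K b * U + algebraMap ℂ K c * V) / u1 := by
        rw [hv1]; field_simp
      rw [this]
      exact div_mem (add_mem (add_mem (F.algebraMap_mem _) (mul_mem (F.algebraMap_mem _) hFU))
        (mul_mem (F.algebraMap_mem _) hFV)) hFu1
    have hFA : A ∈ F := by
      rw [hA]; exact mul_mem (F.algebraMap_mem _) (sub_mem (F.algebraMap_mem _) hFz)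
    have hFB : B ∈ F := by
      rw [hB]; exact mul_mem (F.algebraMap_mem _) (sub_mem (F.algebraMap_mem _) hFz)
    have hFD : D ∈ F := by
      rw [hD]; exact sub_mem (mul_mem hFA (F.algebraMap_mem _)) (mul_mem hFB (F.algebraMap_mem _))
    have hFt : t ∈ F := by
      have : t = V * B / D := by rw [hV]; field_simp
      rw [this]
      exact div_mem (mul_mem hFV hFB) hFD
    have hFw3 : w ^ 3 ∈ F := by
      rw [hw]
      exact mul_mem (mul_mem (mul_mem (mul_mem hFz (sub_mem hFz (one_mem _))) hFA) hFB) hFD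
    have hFs : W * u1 / D ∈ F := div_mem (mul_mem hFW hFu1) hFD
    have hxs : x = W * u1 / D * w := by rw [hW]; field_simp
    let E : IntermediateField F K := IntermediateField.adjoin F {w}
    have hE : ∀ r ∈ F, r ∈ E := fun r hr => E.algebraMap_mem ⟨r, hr⟩
    have hEw : w ∈ E := IntermediateField.mem_adjoin_simple_self F w
    have hkE : k ∈ E := by
      refine hgen (E.restrictScalars ℂ) (hE z hFz) hEw (hE t hFt) ?_ k
      change x ∈ E
      rw [hxs]
      exact mul_mem (hE _ hFs) hEw
    have hwInt : IsIntegral F w := by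
      refine IsIntegral.of_pow (n := 3) (by norm_num) ?_
      exact isIntegral_algebraMap (x := (⟨w ^ 3, hFw3⟩ : F))
    have hkA : k ∈ Algebra.adjoin F {w} := by
      rw [← IntermediateField.adjoin_simple_toSubalgebra_of_isAlgebraic hwInt.isAlgebraic]
      exact hkE
    rw [Algebra.adjoin_singleton_eq_range_aeval] at hkA
    obtain ⟨p, hp⟩ := hkA
    have hmon : ∀ n : ℕ, ∀ r ∈ F, r * w ^ n + τ (r * w ^ n) + τ (τ (r * w ^ n)) ∈ F := by
      intro n
      induction n using Nat.strong_induction_on with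
      | _ n ih =>
        intro r hr
        by_cases hn : 3 ≤ n
        · have h1 : r * w ^ n = (r * w ^ 3) * w ^ (n - 3) := by
            rw [mul_assoc, ← pow_add]; congr 2; omega
          rw [h1]
          exact ih (n - 3) (by omega) _ (mul_mem hr hFw3)
        · have hn' : n = 0 ∨ n = 1 ∨ n = 2 := by omega
          rcases hn' with rfl | rfl | rfl
          · rw [pow_zero, mul_one, hFτ r hr, hFτ r hr]
            exact add_mem (add_mem hr hr) hr
          · have : r * w ^ 1 + τ (r * w ^ 1) + τ (τ (r * w ^ 1)) = 0 := by
              simp only [map_mul, map_pow, hτw, hFτ r hr, AlgEquiv.commutes]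
              linear_combination r * w * hωsum + r * w * algebraMap ℂ K ω * hωK
            rw [this]; exact zero_mem _
          · have : r * w ^ 2 + τ (r * w ^ 2) + τ (τ (r * w ^ 2)) = 0 := by
              simp only [map_mul, map_pow, hτw, hFτ r hr, AlgEquiv.commutes]
              linear_combination r * w ^ 2 * hωsum + r * w ^ 2 * algebraMap ℂ K ω * hωK +
                r * w ^ 2 * (algebraMap ℂ K ω ^ 5 + algebraMap ℂ K ω ^ 2) * hωK
            rw [this]; exact zero_mem _
    have havg : ∀ p : Polynomial F, Polynomial.aeval w p + τ (Polynomial.aeval w p) +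
        τ (τ (Polynomial.aeval w p)) ∈ F := by
      intro p
      induction p using Polynomial.induction_on' with
      | add p q hp hq =>
        have := add_mem hp hq
        simp only [map_add]
        convert this using 1
        ring
      | monomial n r =>
        rw [Polynomial.aeval_monomial]
        exact hmon n r r.2
    have h3 := havg p
    have hp' : Polynomial.aeval w p = k := hp
    rw [hp', hk, hk] at h3
    have h4 : k = algebraMap ℂ K (3⁻¹) * (k + k + k) := by
      rw [map_inv₀, map_ofNat]
      have : (3 : K) ≠ 0 := by
        have : CharZero K := charZero_of_injective_algebraMap (algebraMap ℂ K).injective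
        norm_num
      field_simp
      ring
    have h5 : k ∈ F := by
      rw [h4]
      exact mul_mem (F.algebraMap_mem _) h3
    exact h5
  · rw [hf_W, hρW, Algebra.smul_def, map_pow]
  · rw [hf_U, hρU]
  · rw [hf_V, hρV]
  · intro h
    rw [h, map_zero] at hf_W
    exact hW0 hf_W.symm

lemma exists_P2 (a b c : ℂ) (ha0 : a ≠ 0) (hb0 : b ≠ 0) (hc0 : c ≠ 0) (hbc : b ≠ c) :
    ∃ p : MvPolynomial (Fin 2) ℂ, p ≠ 0 ∧ aeval ![X 0, X 2] p = P4 a b c := by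
  refine ⟨Polynomial.aeval (X 0) (P1 a b c), ?_, ?_⟩
  · intro h
    have h0 : P1 a b c = 0 := by
      apply Polynomial.funext
      intro y
      have := congrArg (aeval ![y, 0]) h
      rw [← Polynomial.aeval_algHom_apply] at this
      simpa [Polynomial.aeval_def, Polynomial.eval₂_eq_eval_map] using this
    have h1 := P1_prime a b c ha0 hb0 hc0 hbc
    rw [h0, map_zero, sub_zero] at h1
    exact not_irreducible_pow (by norm_num) h1.irreducible
  · rw [← Polynomial.aeval_algHom_apply]
    simp [P1, P4, A₁4, B₁4, MvPolynomial.algebraMap_eq]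

lemma hI2 (a b c : ℂ) (e : Fin 4 → ℂ) (h0 : e 0 = 1) (h1 : e 1 ^ 3 = 1) (h2 : e 2 = 1)
    (h3 : e 3 ^ 3 = 1) :
    ∀ p ∈ Ideal.span {pC₁ a b c, pF₁4},
      aeval (fun i => e i • (X i : MvPolynomial (Fin 4) ℂ)) p ∈ Ideal.span {pC₁ a b c, pF₁4} := by
  have hle : Ideal.span {pC₁ a b c, pF₁4} ≤ Ideal.comap
      (aeval (fun i => e i • (X i : MvPolynomial (Fin 4) ℂ))) (Ideal.span {pC₁ a b c, pF₁4}) := by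
    rw [Ideal.span_le]
    rintro q (rfl | rfl)
    · change aeval (fun i => e i • (X i : MvPolynomial (Fin 4) ℂ)) (pC₁ a b c) ∈
        Ideal.span {pC₁ a b c, pF₁4}
      have : aeval (fun i => e i • (X i : MvPolynomial (Fin 4) ℂ)) (pC₁ a b c) = pC₁ a b c := by
        simp [pC₁, P4, A₁4, B₁4, h0, smul_pow, h1, MvPolynomial.algebraMap_eq]
      rw [this]
      exact Ideal.subset_span (by simp)
    · change aeval (fun i => e i • (X i : MvPolynomial (Fin 4) ℂ)) pF₁4 ∈
        Ideal.span {pC₁ a b c, pF₁4}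
      have : aeval (fun i => e i • (X i : MvPolynomial (Fin 4) ℂ)) pF₁4 = pF₁4 := by
        simp [pF₁4, h2, smul_pow, h3]
      rw [this]
      exact Ideal.subset_span (by simp)
  exact fun p hp => hle hp

lemma hIS (a b c : ℂ) (e : Fin 3 → ℂ) (h0 : e 0 ^ 3 = 1) (h1 : e 1 = 1) (h2 : e 2 = 1) :
    ∀ p ∈ Ideal.span {pS a b c},
      aeval (fun i => e i • (X i : MvPolynomial (Fin 3) ℂ)) p ∈ Ideal.span {pS a b c} := by
  intro p hp
  obtain ⟨q, rfl⟩ := Ideal.mem_span_singleton.mp hp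
  have : aeval (fun i => e i • (X i : MvPolynomial (Fin 3) ℂ)) (pS a b c) = pS a b c := by
    simp [pS, u₁S, v₁S, smul_pow, h0, h1, h2, MvPolynomial.algebraMap_eq]
  rw [map_mul, this]
  exact Ideal.mul_mem_right _ _ (Ideal.mem_span_singleton_self _)

set_option maxHeartbeats 4000000 in
/-- Let `a, b, c ∈ ℂ ∖ {0,1}` be pairwise distinct and let
`K = Frac(ℂ[z,w₂,t₃,x]/(w₂³ − P(z), x³ − t₃(t₃+1)))` be the function field of `C₁ × F₁`.
Let `τ` be the order-3 automorphism of `K` with `τ(w₂) = ω²·w₂`, `τ(x) = ω²·x` (fixing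
`z, t₃`), and let `ρ` be the order-3 automorphism of `K` with `ρ(w₂) = ω·w₂` (fixing
`z, t₃, x`); `ρ` preserves the fixed field `L = K^τ`.  Then there is a `ℂ`-algebra
isomorphism `φ` from the function field of the surface `S : w³·u₁v₁(v₁−u₁) = u·v` onto
`L` intertwining the order-3 automorphism `w ↦ ω²·w` of `Frac(S)` with the restriction
of `ρ` to `L`: i.e. `S` is `G`-birationally equivalent to `(C₁ × F₁)/G` with its
residual `G = ℤ/3ℤ` action coming from the factor `C₁`. -/
theorem stmt7 (a b c : ℂ) (ha0 : a ≠ 0) (ha1 : a ≠ 1) (hb0 : b ≠ 0) (hb1 : b ≠ 1)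
    (hc0 : c ≠ 0) (hc1 : c ≠ 1) (hab : a ≠ b) (hac : a ≠ c) (hbc : b ≠ c) :
    ∃ (τ ρ : FractionRing (HSurf2 (pC₁ a b c) pF₁4) ≃ₐ[ℂ] FractionRing (HSurf2 (pC₁ a b c) pF₁4)),
      orderOf τ = 3 ∧
      τ (cls2 (pC₁ a b c) pF₁4 (X 1)) = (ω ^ 2 : ℂ) • cls2 (pC₁ a b c) pF₁4 (X 1) ∧
      τ (cls2 (pC₁ a b c) pF₁4 (X 3)) = (ω ^ 2 : ℂ) • cls2 (pC₁ a b c) pF₁4 (X 3) ∧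
      τ (cls2 (pC₁ a b c) pF₁4 (X 0)) = cls2 (pC₁ a b c) pF₁4 (X 0) ∧
      τ (cls2 (pC₁ a b c) pF₁4 (X 2)) = cls2 (pC₁ a b c) pF₁4 (X 2) ∧
      orderOf ρ = 3 ∧
      ρ (cls2 (pC₁ a b c) pF₁4 (X 1)) = (ω : ℂ) • cls2 (pC₁ a b c) pF₁4 (X 1) ∧
      ρ (cls2 (pC₁ a b c) pF₁4 (X 0)) = cls2 (pC₁ a b c) pF₁4 (X 0) ∧
      ρ (cls2 (pC₁ a b c) pF₁4 (X 2)) = cls2 (pC₁ a b c) pF₁4 (X 2) ∧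
      ρ (cls2 (pC₁ a b c) pF₁4 (X 3)) = cls2 (pC₁ a b c) pF₁4 (X 3) ∧
      (∀ k, τ k = k → τ (ρ k) = ρ k) ∧
      ∃ (σS : FractionRing (HSurf (pS a b c)) ≃ₐ[ℂ] FractionRing (HSurf (pS a b c)))
        (φ : FractionRing (HSurf (pS a b c)) ≃ₐ[ℂ]
          (AlgHom.equalizer τ.toAlgHom (AlgHom.id ℂ (FractionRing (HSurf2 (pC₁ a b c) pF₁4))))),
        orderOf σS = 3 ∧
        σS (cls (pS a b c) (X 0)) = (ω ^ 2 : ℂ) • cls (pS a b c) (X 0) ∧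
        σS (cls (pS a b c) (X 1)) = cls (pS a b c) (X 1) ∧
        σS (cls (pS a b c) (X 2)) = cls (pS a b c) (X 2) ∧
        ∀ s, (↑(φ (σS s)) : FractionRing (HSurf2 (pC₁ a b c) pF₁4)) = ρ ↑(φ s) := by
  have hdom2 : IsDomain (HSurf2 (pC₁ a b c) pF₁4) := R2_domain a b c ha0 hb0 hc0 hbc
  have hprS := pS_prime a b c ha0 ha1
  have hdomS : IsDomain (HSurf (pS a b c)) :=
    (Ideal.Quotient.isDomain_iff_prime _).mpr
      ((Ideal.span_singleton_prime hprS.ne_zero).mpr hprS)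
  let I := Ideal.span {pC₁ a b c, pF₁4}
  let K := FractionRing (HSurf2 (pC₁ a b c) pF₁4)
  let μ : MvPolynomial (Fin 4) ℂ →ₐ[ℂ] K :=
    (IsScalarTower.toAlgHom ℂ (HSurf2 (pC₁ a b c) pF₁4) K).comp (Ideal.Quotient.mkₐ ℂ I)
  have hμ : ∀ p, cls2 (pC₁ a b c) pF₁4 p = μ p := fun p => rfl
  have hμI : ∀ p ∈ I, μ p = 0 := by
    intro p hp
    have h1 : Ideal.Quotient.mk I p = 0 := Ideal.Quotient.eq_zero_iff_mem.mpr hp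
    change algebraMap (HSurf2 (pC₁ a b c) pF₁4) K (Ideal.Quotient.mk I p) = 0
    rw [h1, map_zero]
  have hμne : ∀ p : MvPolynomial (Fin 2) ℂ, p ≠ 0 → μ (aeval ![X 0, X 2] p) ≠ 0 := by
    intro p hp h
    apply R2_ne_zero a b c p hp
    apply IsFractionRing.injective (HSurf2 (pC₁ a b c) pF₁4) K
    rw [map_zero]
    exact h
  have hC : μ (pC₁ a b c) = 0 := hμI _ (Ideal.subset_span (by simp))
  have hF : μ pF₁4 = 0 := hμI _ (Ideal.subset_span (by simp))
  have hwP : μ (X 1) ^ 3 = μ (P4 a b c) := by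
    have h : μ (X 1 ^ 3 - P4 a b c) = 0 := hC
    rw [map_sub, map_pow] at h
    exact sub_eq_zero.mp h
  have hxF : μ (X 3) ^ 3 = μ (X 2) * (μ (X 2) + 1) := by
    have h : μ (X 3 ^ 3 - X 2 * (X 2 + 1)) = 0 := hF
    rw [map_sub, map_pow, map_mul, map_add, map_one] at h
    exact sub_eq_zero.mp h
  have hw0 : μ (X 1) ≠ 0 := by
    intro h
    obtain ⟨p, hp, hp'⟩ := exists_P2 a b c ha0 hb0 hc0 hbc
    apply hμne p hp
    rw [hp', ← hwP, h]
    simp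
  have hω6 : (ω ^ 2) ^ 3 = 1 := by rw [← pow_mul, mul_comm, pow_mul, omega_pow_three, one_pow]
  obtain ⟨τ, hτo, hτ⟩ := exists_aut I ![1, ω ^ 2, 1, ω ^ 2]
    (by intro i; fin_cases i <;> simp [hω6]) (hI2 a b c _ rfl hω6 rfl hω6) 1 omega_sq_ne_one hw0
  obtain ⟨ρ, hρo, hρ⟩ := exists_aut I ![1, ω, 1, 1]
    (by intro i; fin_cases i <;> simp [omega_pow_three])
    (hI2 a b c _ rfl omega_pow_three rfl (one_pow 3)) 1 omega_ne_one hw0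
  have hτ0 : τ (μ (X 0)) = μ (X 0) := (hτ 0).trans (one_smul _ _)
  have hτ1 : τ (μ (X 1)) = (ω ^ 2 : ℂ) • μ (X 1) := hτ 1
  have hτ2 : τ (μ (X 2)) = μ (X 2) := (hτ 2).trans (one_smul _ _)
  have hτ3 : τ (μ (X 3)) = (ω ^ 2 : ℂ) • μ (X 3) := hτ 3
  have hρ0 : ρ (μ (X 0)) = μ (X 0) := (hρ 0).trans (one_smul _ _)
  have hρ1 : ρ (μ (X 1)) = (ω : ℂ) • μ (X 1) := hρ 1
  have hρ2 : ρ (μ (X 2)) = μ (X 2) := (hρ 2).trans (one_smul _ _)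
  have hρ3 : ρ (μ (X 3)) = μ (X 3) := (hρ 3).trans (one_smul _ _)
  have hind : AlgebraicIndependent ℂ ![μ (X 0), μ (X 2)] := by
    rw [algebraicIndependent_iff]
    intro p hp
    by_contra hne
    apply hμne p hne
    rw [← hp]
    have h1 : μ.comp (aeval ![X 0, X 2]) = aeval ![μ (X 0), μ (X 2)] := by
      apply MvPolynomial.algHom_ext
      intro i
      fin_cases i <;> simp
    exact DFunLike.congr_fun h1 p
  have hgen : ∀ F : IntermediateField ℂ K, μ (X 0) ∈ F → μ (X 1) ∈ F → μ (X 2) ∈ F →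
      μ (X 3) ∈ F → ∀ k, k ∈ F := by
    intro F h0 h1 h2 h3 k
    have hp : ∀ p, μ p ∈ F := by
      intro p
      induction p using MvPolynomial.induction_on with
      | C r => rw [algHom_C]; exact F.algebraMap_mem r
      | add p q hp hq => rw [map_add]; exact add_mem hp hq
      | mul_X p i hp =>
        rw [map_mul]
        refine mul_mem hp ?_
        fin_cases i
        · exact h0
        · exact h1
        · exact h2
        · exact h3
    obtain ⟨p, q, -, rfl⟩ := IsFractionRing.div_surjective (HSurf2 (pC₁ a b c) pF₁4) k
    obtain ⟨p, rfl⟩ := Ideal.Quotient.mk_surjective p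
    obtain ⟨q, rfl⟩ := Ideal.Quotient.mk_surjective q
    exact div_mem (hp p) (hp q)
  have hμC : ∀ r : ℂ, μ (C r) = algebraMap ℂ K r := fun r => algHom_C μ r
  obtain ⟨f, hfr, hf0, hf1, hf2, hX0⟩ := core a b c ha0 ha1 hab hac hbc (K := K)
    (μ (X 0)) (μ (X 1)) (μ (X 2)) (μ (X 3)) hind hgen (μ (A₁4 b c)) (μ (B₁4 b c))
    (μ (A₁4 b c * C (b₁ a b c) - B₁4 b c * C (a₁ a b c)))
    (by rw [A₁4, map_mul, map_sub, hμC, hμC]) (by rw [B₁4, map_mul, map_sub, hμC, hμC])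
    (by rw [map_sub, map_mul, map_mul, hμC, hμC])
    (by rw [hwP, P4]; simp only [map_mul, map_sub, map_one])
    hxF τ ρ hτ0 hτ2 hτ1 hτ3 hρ0 hρ2 hρ1 hρ3 hdomS
  obtain ⟨σS, hσo, hσ⟩ := exists_aut (Ideal.span {pS a b c}) ![ω ^ 2, 1, 1]
    (by intro i; fin_cases i <;> simp [hω6]) (hIS a b c _ hω6 rfl rfl) 0 omega_sq_ne_one hX0
  have hσ0 : σS (cls (pS a b c) (X 0)) = (ω ^ 2 : ℂ) • cls (pS a b c) (X 0) := hσ 0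
  have hσ1 : σS (cls (pS a b c) (X 1)) = cls (pS a b c) (X 1) := (hσ 1).trans (one_smul _ _)
  have hσ2 : σS (cls (pS a b c) (X 2)) = cls (pS a b c) (X 2) := (hσ 2).trans (one_smul _ _)
  have hcomm_fs : f.comp σS.toAlgHom = ρ.toAlgHom.comp f := by
    apply algHom_ext_clsI
    intro i
    change f (σS (cls (pS a b c) (X i))) = ρ (f (cls (pS a b c) (X i)))
    fin_cases i
    · change f (σS (cls (pS a b c) (X 0))) = ρ (f (cls (pS a b c) (X 0)))
      rw [hσ0, hf0, map_smul]
    · change f (σS (cls (pS a b c) (X 1))) = ρ (f (cls (pS a b c) (X 1)))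
      rw [hσ1, hf1]
    · change f (σS (cls (pS a b c) (X 2))) = ρ (f (cls (pS a b c) (X 2)))
      rw [hσ2, hf2]
  have hmem : ∀ s, f s ∈ AlgHom.equalizer τ.toAlgHom (AlgHom.id ℂ K) :=
    fun s => (hfr (f s)).mpr ⟨s, rfl⟩
  let g : FractionRing (HSurf (pS a b c)) →ₐ[ℂ] AlgHom.equalizer τ.toAlgHom (AlgHom.id ℂ K) :=
    f.codRestrict _ hmem
  have hg : Function.Bijective g := by
    constructor
    · intro x y hxy
      exact f.toRingHom.injective (congrArg Subtype.val hxy)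
    · rintro ⟨k, hk⟩
      obtain ⟨s, hs⟩ := (hfr k).mp hk
      exact ⟨s, Subtype.ext hs⟩
  refine ⟨τ, ρ, hτo, hτ1, hτ3, hτ0, hτ2, hρo, hρ1, hρ0, hρ2, hρ3, ?_, σS,
    AlgEquiv.ofBijective g hg, hσo, hσ0, hσ1, hσ2, ?_⟩
  · intro k hk
    obtain ⟨s, rfl⟩ := (hfr k).mp hk
    refine (hfr _).mpr ⟨σS s, ?_⟩
    exact DFunLike.congr_fun hcomm_fs s
  · intro s
    exact DFunLike.congr_fun hcomm_fs s
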